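/- Let s and t be terms (or equal-length tuples of terms) with Var(s) ∩ Var(t) = ∅ and t linear, and let S be a set of variables with S ∩ Var(t) = ∅. If s and t are unifiable, then there exists a relevant and idempotent most general unifier θ of s ≐ t such that the restriction θ|Var(s) is linear for S and Ran(θ|Var(s)) ⊆ Var(t). -/

import Mathlib

/-- Finite first-order terms: variables and function applications.
A function symbol is identified by its name together with the number of
arguments it is applied to (fixed arity). -/
inductive Trm : Type where
  | var : ℕ → Trm
  | fn  : ℕ → List Trm → Trm

namespace Trm

/-- `|t|`: the number of occurrences of variables and function symbols
(including constants) in the term `t`. -/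
def size : Trm → ℕ
  | .var _ => 1
  | .fn _ ts => 1 + (ts.attach.map (fun ⟨t, _⟩ => size t)).sum
decreasing_by
  have := List.sizeOf_lt_of_mem ‹_ ∈ ts›
  simp [Trm.fn.sizeOf_spec]; omega

/-- Application of a substitution (a map from variables to terms) to a term. -/
def subst (σ : ℕ → Trm) : Trm → Trm
  | .var x => σ x
  | .fn f ts => .fn f (ts.attach.map (fun ⟨t, _⟩ => subst σ t))
decreasing_by
  have := List.sizeOf_lt_of_mem ‹_ ∈ ts›
  simp [Trm.fn.sizeOf_spec]; omega

/-- The number of occurrences of the variable `x` in a term. -/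
def count (x : ℕ) : Trm → ℕ
  | .var y => if y = x then 1 else 0
  | .fn _ ts => (ts.attach.map (fun ⟨t, _⟩ => count x t)).sum
decreasing_by
  have := List.sizeOf_lt_of_mem ‹_ ∈ ts›
  simp [Trm.fn.sizeOf_spec]; omega

/-- `Occurs x t` : the variable `x` occurs in the term `t`. -/
inductive Occurs (x : ℕ) : Trm → Prop where
  | var : Occurs x (.var x)
  | fn {f : ℕ} {ts : List Trm} {t : Trm} : t ∈ ts → Occurs x t → Occurs x (.fn f ts)

end Trm

/-- The set of variables occurring in a term. -/
def varSet (t : Trm) : Set ℕ := {x | Trm.Occurs x t}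

/-- The set of variables occurring in a list (tuple) of terms. -/
def varsL (l : List Trm) : Set ℕ := {x | ∃ t ∈ l, Trm.Occurs x t}

/-- The number of occurrences of a variable in a list (tuple) of terms. -/
def countL (x : ℕ) (l : List Trm) : ℕ := (l.map (Trm.count x)).sum

/-- A term is ground if no variable occurs in it. -/
def Ground (t : Trm) : Prop := ∀ x, ¬ Trm.Occurs x t

/-- An equation set: a set of equations `s ≐ t` between terms,
represented as pairs of terms. -/
abbrev EqSet := Set (Trm × Trm)

/-- `σ` is a solution (unifier) of the equation set `E`. -/
def Solves (σ : ℕ → Trm) (E : EqSet) : Prop :=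
  ∀ e ∈ E, Trm.subst σ e.1 = Trm.subst σ e.2

/-- `E` is unifiable: it has a unifier. -/
def Unifiable (E : EqSet) : Prop := ∃ σ, Solves σ E

/-- `θ` is a most general unifier of `E`. -/
def IsMgu (θ : ℕ → Trm) (E : EqSet) : Prop :=
  Solves θ E ∧ ∀ σ, Solves σ E → ∃ ρ, ∀ x, σ x = Trm.subst ρ (θ x)

/-- The equation set `s ≐̈ t` pairing corresponding members of two
equal-length tuples of terms. -/
def zipEqs (s t : List Trm) : EqSet := {e | e ∈ s.zip t}

/-- `Dom(θ) = {X | Xθ ≠ X}`. -/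
def Dom (θ : ℕ → Trm) : Set ℕ := {x | θ x ≠ .var x}

/-- `Ran(θ) = ⋃_{X ∈ Dom(θ)} Var(Xθ)`. -/
def Ran (θ : ℕ → Trm) : Set ℕ := {x | ∃ y ∈ Dom θ, Trm.Occurs x (θ y)}

/-- `θ` is idempotent: `(uθ)θ = uθ` for every term `u`. -/
def Idempotent (θ : ℕ → Trm) : Prop :=
  ∀ u : Trm, Trm.subst θ (Trm.subst θ u) = Trm.subst θ u

/- The restriction `θ|S` of a substitution to a set of variables:
`X(θ|S) = Xθ` for `X ∈ S` and `X(θ|S) = X` otherwise. -/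
open Classical in
noncomputable def restrict (θ : ℕ → Trm) (S : Set ℕ) : ℕ → Trm :=
  fun x => if x ∈ S then θ x else .var x

/-- A pair of terms is linear: no variable occurs more than once in it. -/
def LinearPair (u v : Trm) : Prop := ∀ x, Trm.count x u + Trm.count x v ≤ 1

/-- A tuple of terms is linear: no variable occurs more than once in it. -/
def LinearL (l : List Trm) : Prop := ∀ x, countL x l ≤ 1

/-- `θ` is linear for a set of variables `S` if for any two distinct
variables `X, Y ∈ S` the pair `(Xθ, Yθ)` is linear. -/
def LinearFor (θ : ℕ → Trm) (S : Set ℕ) : Prop :=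
  ∀ X ∈ S, ∀ Y ∈ S, X ≠ Y → LinearPair (θ X) (θ Y)

/-! Solve the equations of `s ≐ t` from left to right, applying each unifier found to the remaining
left-hand sides.  Since `t` is linear, the remaining right-hand sides share no variable with what
has been substituted, so every intermediate problem again has a linear right-hand side disjoint
from its left-hand side, and an equation between a variable and a term is solved by a single
binding.  Linearity survives the composition of the unifiers once it is phrased as the existence, for
every variable `z`, of a *source*: one variable `x` such that `z` occurs in the image of `y` no more
often than `x` occurs in `y`. -/

open Set hiding restrict
open Function (update update_of_ne)

namespace Trm

@[simp] theorem subst_var (σ : ℕ → Trm) (x : ℕ) : subst σ (.var x) = σ x := by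
  rw [subst]

@[simp] theorem subst_fn (σ : ℕ → Trm) (f : ℕ) (ts : List Trm) :
    subst σ (.fn f ts) = .fn f (ts.map (subst σ)) := by
  simp [subst]

@[simp] theorem count_var (x y : ℕ) : count x (.var y) = if y = x then 1 else 0 := by
  rw [count]

@[simp] theorem count_fn (x f : ℕ) (ts : List Trm) : count x (.fn f ts) = countL x ts := by
  simp [count, countL]

@[elab_as_elim]
theorem nestedInduction {P : Trm → Prop} (var : ∀ x, P (.var x))
    (fn : ∀ f ts, (∀ t ∈ ts, P t) → P (.fn f ts)) : ∀ t, P t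
  | .var x => var x
  | .fn f ts => fn f ts fun t _ => nestedInduction var fn t

theorem subst_var_eq_self (t : Trm) : subst .var t = t := by
  induction t using nestedInduction with
  | var x => simp
  | fn f ts ih => simpa using (List.map_congr_left ih).trans ts.map_id

/-- The composition of two substitutions, the one on the right being applied first. -/
def comp (σ θ : ℕ → Trm) : ℕ → Trm := fun x => subst σ (θ x)

theorem subst_comp (σ θ : ℕ → Trm) (t : Trm) : subst (comp σ θ) t = subst σ (subst θ t) := by
  induction t using nestedInduction with
  | var x => simp [comp]
  | fn f ts ih => simpa using ih

theorem comp_assoc (ρ σ θ : ℕ → Trm) : comp (comp ρ σ) θ = comp ρ (comp σ θ) :=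
  funext fun x => subst_comp ρ σ (θ x)

theorem comp_var (σ : ℕ → Trm) : comp σ .var = σ :=
  funext (subst_var σ)

theorem comp_update_var {σ : ℕ → Trm} {x : ℕ} {u : Trm} (h : σ x = subst σ u) :
    comp σ (update .var x u) = σ := by
  funext y
  rcases eq_or_ne y x with rfl | hy <;> simp [comp, *]

end Trm

open Trm

@[simp] theorem countL_nil (x : ℕ) : countL x [] = 0 := rfl

@[simp] theorem countL_cons (x : ℕ) (t : Trm) (ts : List Trm) :
    countL x (t :: ts) = count x t + countL x ts := by
  simp [countL]

@[simp] theorem varSet_var (x : ℕ) : varSet (.var x) = {x} := by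
  ext y
  exact ⟨fun h => by cases h; rfl, fun h => by rw [mem_singleton_iff.1 h]; exact .var⟩

@[simp] theorem varSet_fn (f : ℕ) (ts : List Trm) : varSet (.fn f ts) = varsL ts := by
  ext x
  exact ⟨fun h => by cases h with | fn ht hx => exact ⟨_, ht, hx⟩, fun ⟨_, ht, hx⟩ => .fn ht hx⟩

theorem mem_varsL {x : ℕ} {ts : List Trm} : x ∈ varsL ts ↔ ∃ t ∈ ts, x ∈ varSet t :=
  Iff.rfl

@[simp] theorem varsL_nil : varsL [] = ∅ := by
  simp [varsL]

@[simp] theorem varsL_cons (t : Trm) (ts : List Trm) :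
    varsL (t :: ts) = varSet t ∪ varsL ts := by
  ext x
  simp [mem_varsL]

theorem countL_pos_iff {x : ℕ} {ts : List Trm} : 0 < countL x ts ↔ ∃ t ∈ ts, 0 < count x t := by
  simp [countL, List.sum_pos_iff_exists_pos_nat]

theorem mem_varSet_iff_count_pos {x : ℕ} {t : Trm} : x ∈ varSet t ↔ 0 < count x t := by
  induction t using nestedInduction with
  | var y => simp [Nat.pos_iff_ne_zero, eq_comm]
  | fn f ts ih =>
    rw [varSet_fn, count_fn, countL_pos_iff, mem_varsL]
    exact exists_congr fun t => and_congr_right (ih t)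

theorem mem_varsL_iff_countL_pos {x : ℕ} {ts : List Trm} : x ∈ varsL ts ↔ 0 < countL x ts := by
  simp only [mem_varsL, mem_varSet_iff_count_pos, countL_pos_iff]

theorem mem_varSet_subst {σ : ℕ → Trm} {t : Trm} {z : ℕ} :
    z ∈ varSet (subst σ t) ↔ ∃ x ∈ varSet t, z ∈ varSet (σ x) := by
  induction t using nestedInduction with
  | var x => simp
  | fn f ts ih =>
    simp only [subst_fn, varSet_fn, mem_varsL, List.mem_map, exists_exists_and_eq_and]
    constructor
    · rintro ⟨t, ht, hz⟩
      obtain ⟨x, hx, hz⟩ := (ih t ht).1 hz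
      exact ⟨x, ⟨t, ht, hx⟩, hz⟩
    · rintro ⟨x, ⟨t, ht, hx⟩, hz⟩
      exact ⟨t, ht, (ih t ht).2 ⟨x, hx, hz⟩⟩

namespace Trm

theorem count_eq_zero_of_notMem {x : ℕ} {t : Trm} (h : x ∉ varSet t) : count x t = 0 := by
  rw [mem_varSet_iff_count_pos] at h
  lia

theorem count_subst_le {σ : ℕ → Trm} {t : Trm} {x z : ℕ}
    (h : ∀ y ∈ varSet t, count z (σ y) ≤ count x (.var y)) :
    count z (subst σ t) ≤ count x t := by
  induction t using nestedInduction with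
  | var y => simpa using h y
  | fn f ts ih =>
    rw [varSet_fn] at h
    rw [subst_fn, count_fn, count_fn, countL, countL, List.map_map]
    exact List.sum_le_sum fun t ht => ih t ht fun y hy => h y ⟨t, ht, hy⟩

theorem subst_congr {σ τ : ℕ → Trm} {t : Trm} (h : EqOn σ τ (varSet t)) :
    subst σ t = subst τ t := by
  induction t using nestedInduction with
  | var x => simpa using h
  | fn f ts ih =>
    rw [varSet_fn] at h
    simpa using fun t ht => ih t ht fun x hx => h ⟨t, ht, hx⟩

theorem subst_eq_self {σ : ℕ → Trm} {t : Trm} (h : EqOn σ .var (varSet t)) : subst σ t = t :=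
  (subst_congr h).trans (subst_var_eq_self t)

theorem map_subst_eq_self {σ : ℕ → Trm} {ts : List Trm} (h : EqOn σ .var (varsL ts)) :
    ts.map (subst σ) = ts :=
  (List.map_congr_left fun t ht => subst_eq_self fun _ hx => h ⟨t, ht, hx⟩).trans ts.map_id

end Trm

section DomRan

variable {σ θ : ℕ → Trm} {V W : Set ℕ} {x z : ℕ}

theorem eq_var_of_notMem_dom (h : x ∉ Dom θ) : θ x = .var x :=
  not_not.1 h

theorem eqOn_var_of_disjoint_dom (h : Disjoint (Dom θ) V) : EqOn θ .var V :=
  fun _ hx => eq_var_of_notMem_dom (h.notMem_of_mem_right hx)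

theorem restrict_eq_of_dom_subset (hθ : Dom θ ⊆ V ∪ W) (hx : x ∉ W) : restrict θ V x = θ x := by
  unfold restrict
  split_ifs with hxV
  · rfl
  · exact (eq_var_of_notMem_dom fun h => (hθ h).elim hxV hx).symm

theorem restrict_univ (θ : ℕ → Trm) : restrict θ univ = θ :=
  funext fun x => if_pos (mem_univ x)

theorem mem_ran_restrict : z ∈ Ran (restrict θ V) ↔ ∃ x ∈ V, x ∈ Dom θ ∧ z ∈ varSet (θ x) := by
  refine exists_congr fun x => ?_
  by_cases hx : x ∈ V <;> simp [Dom, restrict, hx, varSet]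

theorem ran_restrict_mono (h : V ⊆ W) : Ran (restrict θ V) ⊆ Ran (restrict θ W) := by
  intro z hz
  obtain ⟨x, hx, hz⟩ := mem_ran_restrict.1 hz
  exact mem_ran_restrict.2 ⟨x, h hx, hz⟩

theorem varSet_subset_insert_ran_restrict (hx : x ∈ V) :
    varSet (θ x) ⊆ insert x (Ran (restrict θ V)) := by
  intro z hz
  by_cases hxθ : x ∈ Dom θ
  · exact .inr (mem_ran_restrict.2 ⟨x, hx, hxθ, hz⟩)
  · rw [eq_var_of_notMem_dom hxθ, varSet_var] at hz
    exact .inl hz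

theorem varSet_subset_insert_ran (θ : ℕ → Trm) (x : ℕ) : varSet (θ x) ⊆ insert x (Ran θ) := by
  simpa only [restrict_univ] using varSet_subset_insert_ran_restrict (θ := θ) (mem_univ x)

theorem varsL_map_subst_subset (θ : ℕ → Trm) (ts : List Trm) :
    varsL (ts.map (subst θ)) ⊆ varsL ts ∪ Ran θ := by
  intro z hz
  obtain ⟨_, hu, hz⟩ := mem_varsL.1 hz
  obtain ⟨t, ht, rfl⟩ := List.mem_map.1 hu
  obtain ⟨x, hx, hz⟩ := mem_varSet_subst.1 hz
  rcases varSet_subset_insert_ran θ x hz with rfl | hz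
  · exact .inl ⟨t, ht, hx⟩
  · exact .inr hz

theorem dom_comp_subset (σ θ : ℕ → Trm) : Dom (comp σ θ) ⊆ Dom σ ∪ Dom θ := by
  intro x hx
  by_contra! h
  rw [mem_union, not_or] at h
  exact hx (by simp [comp, eq_var_of_notMem_dom h.1, eq_var_of_notMem_dom h.2])

theorem ran_restrict_comp_subset (h : ∀ x ∈ V, varSet (θ x) ⊆ W) :
    Ran (restrict (comp σ θ) V) ⊆ Ran (restrict σ W) ∪ Ran (restrict θ V) := by
  intro z hz
  obtain ⟨x, hx, hxd, hz⟩ := mem_ran_restrict.1 hz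
  obtain ⟨y, hy, hz⟩ := mem_varSet_subst.1 hz
  by_cases hyσ : y ∈ Dom σ
  · exact .inl (mem_ran_restrict.2 ⟨y, h x hx hy, hyσ, hz⟩)
  rw [eq_var_of_notMem_dom hyσ, varSet_var, mem_singleton_iff] at hz
  subst hz
  by_cases hxθ : x ∈ Dom θ
  · exact .inr (mem_ran_restrict.2 ⟨x, hx, hxθ, hy⟩)
  rw [eq_var_of_notMem_dom hxθ, varSet_var, mem_singleton_iff] at hy
  subst hy
  exact ((dom_comp_subset σ θ hxd).elim hyσ hxθ).elim

theorem ran_comp_subset (σ θ : ℕ → Trm) : Ran (comp σ θ) ⊆ Ran σ ∪ Ran θ := by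
  simpa only [restrict_univ] using
    ran_restrict_comp_subset (σ := σ) (θ := θ) (V := univ) fun _ _ => subset_univ _

theorem dom_union_ran_comp_subset (σ θ : ℕ → Trm) :
    Dom (comp σ θ) ∪ Ran (comp σ θ) ⊆ (Dom σ ∪ Ran σ) ∪ (Dom θ ∪ Ran θ) := by
  rw [union_union_union_comm]
  exact union_subset_union (dom_comp_subset σ θ) (ran_comp_subset σ θ)

theorem dom_update_var_subset (x : ℕ) (u : Trm) : Dom (update .var x u) ⊆ {x} := by
  intro y hy
  by_contra h
  exact hy (update_of_ne h _ _)

theorem ran_restrict_update_var_subset (V : Set ℕ) (x : ℕ) (u : Trm) :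
    Ran (restrict (update .var x u) V) ⊆ varSet u := by
  intro z hz
  obtain ⟨y, -, hy, hz⟩ := mem_ran_restrict.1 hz
  obtain rfl : y = x := dom_update_var_subset x u hy
  simpa using hz

theorem ran_update_var_subset (x : ℕ) (u : Trm) : Ran (update .var x u) ⊆ varSet u := by
  simpa only [restrict_univ] using ran_restrict_update_var_subset univ x u

theorem ran_restrict_eq_empty (h : Disjoint (Dom θ) V) : Ran (restrict θ V) = ∅ := by
  refine eq_empty_of_forall_notMem fun z hz => ?_
  obtain ⟨x, hxV, hxθ, -⟩ := mem_ran_restrict.1 hz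
  exact h.notMem_of_mem_left hxθ hxV

theorem dom_var : Dom .var = ∅ := by
  simp [Dom]

theorem ran_var : Ran .var = ∅ := by
  simp [Ran, dom_var]

end DomRan

/-- The terms `θ y`, for `y ∈ V`, are jointly linear: all occurrences of a variable `z` in them
are accounted for by at most one occurrence in a single `θ x`.  Unlike `LinearFor`, this also makes
each single `θ y` linear.  The bound `count x (.var y)` is the number `1` if `y = x` and `0`
otherwise, in the form in which `Trm.count_subst_le` carries it from variables to terms. -/
def LinearOn (θ : ℕ → Trm) (V : Set ℕ) : Prop :=
  ∀ z, ∃ x, ∀ y ∈ V, count z (θ y) ≤ count x (.var y)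

section LinearOn

variable {σ θ : ℕ → Trm} {V W : Set ℕ}

theorem linearOn_var (V : Set ℕ) : LinearOn .var V :=
  fun z => ⟨z, fun _ _ => le_rfl⟩

theorem LinearOn.mono (hθ : LinearOn θ W) (h : V ⊆ W) : LinearOn θ V :=
  fun z => (hθ z).imp fun _ hx y hy => hx y (h hy)

theorem LinearOn.congr (hσ : LinearOn σ V) (h : EqOn θ σ V) : LinearOn θ V := by
  intro z
  obtain ⟨x, hx⟩ := hσ z
  exact ⟨x, fun y hy => by rw [h hy]; exact hx y hy⟩

theorem LinearOn.comp (hσ : LinearOn σ W) (hθ : LinearOn θ V)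
    (h : ∀ x ∈ V, varSet (θ x) ⊆ W) : LinearOn (comp σ θ) V := by
  intro z
  obtain ⟨w, hw⟩ := hσ z
  obtain ⟨x, hx⟩ := hθ w
  exact ⟨x, fun y hy => (count_subst_le fun v hv => hw v (h y hy hv)).trans (hx y hy)⟩

theorem LinearOn.linearFor (hθ : LinearOn θ V) : LinearFor θ V := by
  intro y hy y' hy' hne z
  obtain ⟨x, hx⟩ := hθ z
  have hyz := hx y hy
  have hyz' := hx y' hy'
  rw [count_var] at hyz hyz'
  grind

theorem linearOn_update_var {x : ℕ} {u : Trm} (hu : ∀ z, count z u ≤ 1) :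
    LinearOn (update .var x u) (varSet u)ᶜ := by
  intro z
  by_cases hz : z ∈ varSet u
  · refine ⟨x, fun y hy => ?_⟩
    rcases eq_or_ne y x with rfl | hyx
    · simpa using hu z
    · have hyz : y ≠ z := fun h => hy (h ▸ hz)
      simp [hyx, hyz]
  · refine ⟨z, fun y _ => ?_⟩
    rcases eq_or_ne y x with rfl | hyx
    · simp [count_eq_zero_of_notMem hz]
    · simp [hyx]

end LinearOn

section StrongMgu

variable {σ θ : ℕ → Trm} {E F : EqSet}

theorem solves_union : Solves σ (E ∪ F) ↔ Solves σ E ∧ Solves σ F := by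
  simp only [Solves, mem_union, or_imp, forall_and]

theorem solves_singleton {a b : Trm} : Solves σ {(a, b)} ↔ subst σ a = subst σ b := by
  simp [Solves]

theorem solves_comp : Solves (comp σ θ) E ↔ Solves σ (Prod.map (subst θ) (subst θ) '' E) := by
  simp only [Solves, subst_comp, forall_mem_image, Prod.map_fst, Prod.map_snd]

/-- A strong most general unifier `θ` of `E`: every unifier `σ` of `E` satisfies `σθ = σ`
(`θ` applied first), so `σ` itself witnesses that `θ` is more general than `σ`.  These are exactly
the idempotent most general unifiers, and they compose along unions of equation sets. -/
def IsStrongMgu (θ : ℕ → Trm) (E : EqSet) : Prop :=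
  Solves θ E ∧ ∀ σ, Solves σ E → comp σ θ = σ

theorem IsStrongMgu.isMgu (h : IsStrongMgu θ E) : IsMgu θ E :=
  ⟨h.1, fun σ hσ => ⟨σ, fun x => (congrFun (h.2 σ hσ) x).symm⟩⟩

theorem IsStrongMgu.idempotent (h : IsStrongMgu θ E) : Idempotent θ :=
  fun u => by rw [← subst_comp, h.2 θ h.1]

theorem IsStrongMgu.of_solves_iff (h : IsStrongMgu θ F) (hEF : ∀ σ, Solves σ E ↔ Solves σ F) :
    IsStrongMgu θ E :=
  ⟨(hEF θ).2 h.1, fun σ hσ => h.2 σ ((hEF σ).1 hσ)⟩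

theorem IsStrongMgu.solves_image (h : IsStrongMgu θ E) (hE : Solves σ E) (hF : Solves σ F) :
    Solves σ (Prod.map (subst θ) (subst θ) '' F) := by
  rw [← solves_comp, h.2 σ hE]
  exact hF

theorem IsStrongMgu.comp (hθ : IsStrongMgu θ E)
    (hσ : IsStrongMgu σ (Prod.map (subst θ) (subst θ) '' F)) :
    IsStrongMgu (comp σ θ) (E ∪ F) := by
  constructor
  · refine solves_union.2 ⟨fun e he => ?_, solves_comp.2 hσ.1⟩
    rw [subst_comp, subst_comp, hθ.1 e he]
  · intro τ hτ
    obtain ⟨hτE, hτF⟩ := solves_union.1 hτ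
    rw [← comp_assoc, hσ.2 τ (hθ.solves_image hτE hτF), hθ.2 τ hτE]

theorem isStrongMgu_var : IsStrongMgu .var ∅ :=
  ⟨by simp [Solves], fun σ _ => comp_var σ⟩

theorem isStrongMgu_update_var {x : ℕ} {u : Trm} (hx : x ∉ varSet u) :
    IsStrongMgu (update .var x u) {(.var x, u)} := by
  constructor
  · have hu : subst (update .var x u) u = u :=
      subst_eq_self fun y hy => update_of_ne (ne_of_mem_of_not_mem hy hx) _ _
    simp [solves_singleton, hu]
  · intro σ hσ
    exact comp_update_var (by simpa using solves_singleton.1 hσ)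

end StrongMgu

theorem zipEqs_nil_left (t : List Trm) : zipEqs [] t = ∅ := by
  simp [zipEqs]

theorem zipEqs_nil_right (s : List Trm) : zipEqs s [] = ∅ := by
  simp [zipEqs]

theorem zipEqs_singleton (a b : Trm) : zipEqs [a] [b] = {(a, b)} := by
  simp [zipEqs]

theorem zipEqs_cons (a b : Trm) (s t : List Trm) :
    zipEqs (a :: s) (b :: t) = zipEqs [a] [b] ∪ zipEqs s t := by
  ext e
  simp [zipEqs]

theorem zipEqs_map (f g : Trm → Trm) (s t : List Trm) :
    zipEqs (s.map f) (t.map g) = Prod.map f g '' zipEqs s t := by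
  ext e
  simp only [zipEqs, List.zip_map, List.mem_map, mem_ofPred_eq, mem_image]

theorem map_subst_eq_map_subst_iff {σ : ℕ → Trm} {s t : List Trm} :
    s.map (subst σ) = t.map (subst σ) ↔ s.length = t.length ∧ Solves σ (zipEqs s t) := by
  induction s generalizing t with
  | nil => cases t <;> simp [Solves, zipEqs]
  | cons a s ih =>
    cases t with
    | nil => simp
    | cons b t =>
      rw [zipEqs_cons, zipEqs_singleton, solves_union, solves_singleton, List.map_cons,
        List.map_cons, List.cons.injEq, ih, List.length_cons, List.length_cons,
        Nat.add_right_cancel_iff]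
      tauto

theorem solves_fn_fn_iff {σ : ℕ → Trm} {f g : ℕ} {ts us : List Trm} :
    Solves σ (zipEqs [.fn f ts] [.fn g us]) ↔
      f = g ∧ ts.length = us.length ∧ Solves σ (zipEqs ts us) := by
  simp [zipEqs_singleton, solves_singleton, map_subst_eq_map_subst_iff]

/-- The unifiers constructed by the induction: a relevant strong most general unifier `θ` of
`s ≐ t` which maps the variables outside `t` to jointly linear terms, and those which it moves to
terms over the variables of `t`. -/
structure IsLinearMgu (θ : ℕ → Trm) (s t : List Trm) : Prop where
  isStrongMgu : IsStrongMgu θ (zipEqs s t)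
  relevant : Dom θ ∪ Ran θ ⊆ varsL s ∪ varsL t
  linearOn : LinearOn θ (varsL t)ᶜ
  ran_restrict_subset : Ran (restrict θ (varsL t)ᶜ) ⊆ varsL t

namespace IsLinearMgu

variable {σ θ : ℕ → Trm} {s t : List Trm} {a b : Trm}

theorem of_zipEqs_eq_empty (h : zipEqs s t = ∅) : IsLinearMgu .var s t where
  isStrongMgu := h ▸ isStrongMgu_var
  relevant := by simp [dom_var, ran_var]
  linearOn := linearOn_var _
  ran_restrict_subset := by simp [ran_restrict_eq_empty, dom_var]

theorem update_left {x : ℕ} (hx : x ∉ varSet b) (hb : ∀ z, count z b ≤ 1) :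
    IsLinearMgu (update .var x b) [.var x] [b] where
  isStrongMgu := by
    rw [zipEqs_singleton]
    exact isStrongMgu_update_var hx
  relevant := by
    simpa using union_subset_union (dom_update_var_subset x b) (ran_update_var_subset x b)
  linearOn := by simpa using linearOn_update_var hb
  ran_restrict_subset := (ran_restrict_update_var_subset _ x b).trans (by simp)

theorem update_right {y : ℕ} (hy : y ∉ varSet a) :
    IsLinearMgu (update .var y a) [a] [.var y] := by
  have hdom : Disjoint (Dom (update .var y a)) (varsL [.var y])ᶜ := by
    rw [disjoint_compl_right_iff_subset]
    exact (dom_update_var_subset y a).trans (by simp)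
  refine ⟨?_, ?_, ?_, ?_⟩
  · refine (isStrongMgu_update_var hy).of_solves_iff fun σ => ?_
    rw [zipEqs_singleton, solves_singleton, solves_singleton, eq_comm]
  · rw [union_comm (varsL [a])]
    exact union_subset_union ((dom_update_var_subset y a).trans (by simp))
      ((ran_update_var_subset y a).trans (by simp))
  · exact (linearOn_var _).congr (eqOn_var_of_disjoint_dom hdom)
  · rw [ran_restrict_eq_empty hdom]
    exact empty_subset _

theorem fn (f : ℕ) (hlen : s.length = t.length) (h : IsLinearMgu θ s t) :
    IsLinearMgu θ [.fn f s] [.fn f t] where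
  isStrongMgu := h.isStrongMgu.of_solves_iff fun σ => by simp [solves_fn_fn_iff, hlen]
  relevant := by simpa only [varsL_cons, varsL_nil, varSet_fn, union_empty] using h.relevant
  linearOn := by simpa using h.linearOn
  ran_restrict_subset := by simpa using h.ran_restrict_subset

theorem disjoint_varsL_map_subst {u v : List Trm} (h : IsLinearMgu θ s t)
    (hs : Disjoint (varsL s) (varsL v)) (ht : Disjoint (varsL t) (varsL v))
    (hu : Disjoint (varsL u) (varsL v)) : Disjoint (varsL (u.map (subst θ))) (varsL v) := by
  have hran : Ran θ ⊆ varsL s ∪ varsL t := subset_union_right.trans h.relevant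
  exact (hu.union_left ((hs.union_left ht).mono_left hran)).mono_left (varsL_map_subst_subset θ u)

theorem map_subst_eq_self {v : List Trm} (h : IsLinearMgu θ s t)
    (hs : Disjoint (varsL s) (varsL v)) (ht : Disjoint (varsL t) (varsL v)) :
    v.map (subst θ) = v :=
  have hdom : Dom θ ⊆ varsL s ∪ varsL t := subset_union_left.trans h.relevant
  Trm.map_subst_eq_self (eqOn_var_of_disjoint_dom ((hs.union_left ht).mono_left hdom))

theorem solves_zipEqs_map (h : IsLinearMgu θ [a] [b]) (ha : Disjoint (varsL [a]) (varsL t))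
    (hb : Disjoint (varsL [b]) (varsL t)) (hσ : Solves σ (zipEqs (a :: s) (b :: t))) :
    Solves σ (zipEqs (s.map (subst θ)) t) := by
  rw [zipEqs_cons, solves_union] at hσ
  rw [← h.map_subst_eq_self ha hb, zipEqs_map]
  exact h.isStrongMgu.solves_image hσ.1 hσ.2

theorem varSet_subset_compl {v : List Trm} (h : IsLinearMgu θ s t)
    (htv : Disjoint (varsL t) (varsL v)) {x : ℕ} (hx : x ∈ (varsL t ∪ varsL v)ᶜ) :
    varSet (θ x) ⊆ (varsL v)ᶜ := by
  rw [compl_union] at hx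
  exact (varSet_subset_insert_ran_restrict hx.1).trans
    (insert_subset hx.2 (h.ran_restrict_subset.trans htv.subset_compl_right))

theorem cons (hθ : IsLinearMgu θ [a] [b]) (hσ : IsLinearMgu σ (s.map (subst θ)) t)
    (ha : Disjoint (varsL [a]) (varsL t)) (hb : Disjoint (varsL [b]) (varsL t)) :
    IsLinearMgu (comp σ θ) (a :: s) (b :: t) := by
  have hvars : ∀ u us, varsL (u :: us) = varsL [u] ∪ varsL us := by simp
  have hmaps : ∀ x ∈ (varsL [b] ∪ varsL t)ᶜ, varSet (θ x) ⊆ (varsL t)ᶜ :=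
    fun x => hθ.varSet_subset_compl hb
  have hanti : (varsL [b] ∪ varsL t)ᶜ ⊆ (varsL [b])ᶜ := compl_subset_compl.2 subset_union_left
  refine ⟨?_, ?_, ?_, ?_⟩
  · rw [zipEqs_cons]
    refine hθ.isStrongMgu.comp ?_
    rw [← zipEqs_map, hθ.map_subst_eq_self ha hb]
    exact hσ.isStrongMgu
  · rw [hvars a, hvars b]
    have hs : varsL (s.map (subst θ)) ⊆ varsL s ∪ (varsL [a] ∪ varsL [b]) :=
      (varsL_map_subst_subset θ s).trans
        (union_subset_union_right _ (subset_union_right.trans hθ.relevant))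
    refine (dom_union_ran_comp_subset σ θ).trans
      (union_subset (hσ.relevant.trans ?_) (hθ.relevant.trans ?_))
    · grind
    · grind
  · rw [hvars b]
    exact hσ.linearOn.comp (hθ.linearOn.mono hanti) hmaps
  · rw [hvars b]
    exact (ran_restrict_comp_subset hmaps).trans (union_subset
      (hσ.ran_restrict_subset.trans subset_union_right)
      ((ran_restrict_mono hanti).trans (hθ.ran_restrict_subset.trans subset_union_left)))

end IsLinearMgu

theorem linearL_cons {b : Trm} {t : List Trm} :
    LinearL (b :: t) ↔ LinearL [b] ∧ LinearL t ∧ Disjoint (varsL [b]) (varsL t) := by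
  simp only [LinearL, disjoint_left, mem_varsL_iff_countL_pos, countL_cons, countL_nil,
    ← forall_and]
  exact forall_congr' fun x => by lia

mutual

theorem exists_isLinearMgu_singleton (a b : Trm) (hab : Disjoint (varsL [a]) (varsL [b]))
    (hb : LinearL [b]) (hu : Unifiable (zipEqs [a] [b])) : ∃ θ, IsLinearMgu θ [a] [b] := by
  match b with
  | .var y => exact ⟨_, .update_right (by simpa using hab)⟩
  | .fn g us =>
    cases a with
    | var x => exact ⟨_, .update_left (by simpa using hab) (by simpa [LinearL] using hb)⟩
    | fn f ts =>
      obtain ⟨σ, hσ⟩ := hu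
      obtain ⟨rfl, hlen, hσ⟩ := solves_fn_fn_iff.1 hσ
      obtain ⟨θ, hθ⟩ :=
        exists_isLinearMgu ts us (by simpa using hab) (by simpa [LinearL] using hb) ⟨σ, hσ⟩
      exact ⟨θ, hθ.fn f hlen⟩

theorem exists_isLinearMgu (s t : List Trm) (hst : Disjoint (varsL s) (varsL t))
    (ht : LinearL t) (hu : Unifiable (zipEqs s t)) : ∃ θ, IsLinearMgu θ s t := by
  match s, t with
  | [], t => exact ⟨_, .of_zipEqs_eq_empty (zipEqs_nil_left t)⟩
  | s, [] => exact ⟨_, .of_zipEqs_eq_empty (zipEqs_nil_right s)⟩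
  | a :: s, b :: t =>
    obtain ⟨hb, ht, hbt⟩ := linearL_cons.1 ht
    obtain ⟨⟨hab, -⟩, hat, hst⟩ : (Disjoint (varsL [a]) (varsL [b]) ∧
        Disjoint (varsL s) (varsL [b])) ∧ Disjoint (varsL [a]) (varsL t) ∧
        Disjoint (varsL s) (varsL t) := by
      simpa [disjoint_union_left, disjoint_union_right] using hst
    obtain ⟨τ, hτ⟩ := hu
    have hτab : Solves τ (zipEqs [a] [b]) := (solves_union.1 (zipEqs_cons a b s t ▸ hτ)).1
    obtain ⟨θ, hθ⟩ := exists_isLinearMgu_singleton a b hab hb ⟨τ, hτab⟩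
    obtain ⟨σ, hσ⟩ := exists_isLinearMgu (s.map (subst θ)) t
      (hθ.disjoint_varsL_map_subst hat hbt hst) ht ⟨τ, hθ.solves_zipEqs_map hat hbt hτ⟩
    exact ⟨comp σ θ, hθ.cons hσ hat hbt⟩

end

namespace IsLinearMgu

variable {θ : ℕ → Trm} {s t : List Trm}

theorem linearFor_restrict (h : IsLinearMgu θ s t) {S : Set ℕ} (hS : Disjoint S (varsL t)) :
    LinearFor (restrict θ (varsL s)) S := by
  have hdom : Dom θ ⊆ varsL s ∪ varsL t := subset_union_left.trans h.relevant
  have hlin : LinearOn θ S := h.linearOn.mono hS.subset_compl_right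
  exact (hlin.congr fun x hx => restrict_eq_of_dom_subset hdom (hS.notMem_of_mem_left hx)).linearFor

theorem ran_restrict_varsL_subset (h : IsLinearMgu θ s t) (hst : Disjoint (varsL s) (varsL t)) :
    Ran (restrict θ (varsL s)) ⊆ varsL t :=
  (ran_restrict_mono hst.subset_compl_right).trans h.ran_restrict_subset

end IsLinearMgu

/-- Let `s` and `t` be equal-length tuples of terms with `Var(s) ∩ Var(t) = ∅`
and `t` linear, and let `S` be a set of variables with `S ∩ Var(t) = ∅`.
If `s` and `t` are unifiable, then there exists a relevant and idempotent mgu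
`θ` of `s ≐ t` such that `θ|Var(s)` is linear for `S` and
`Ran(θ|Var(s)) ⊆ Var(t)`. -/
theorem stmt3 (s t : List Trm) (hlen : s.length = t.length)
    (hdisj : varsL s ∩ varsL t = ∅) (hlin : LinearL t)
    (S : Set ℕ) (hS : S ∩ varsL t = ∅)
    (hu : Unifiable (zipEqs s t)) :
    ∃ θ : ℕ → Trm,
      IsMgu θ (zipEqs s t) ∧
      Dom θ ∪ Ran θ ⊆ varsL s ∪ varsL t ∧
      Idempotent θ ∧
      LinearFor (restrict θ (varsL s)) S ∧
      Ran (restrict θ (varsL s)) ⊆ varsL t := by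
  rw [← disjoint_iff_inter_eq_empty] at hdisj hS
  obtain ⟨θ, hθ⟩ := exists_isLinearMgu s t hdisj hlin hu
  exact ⟨θ, hθ.isStrongMgu.isMgu, hθ.relevant, hθ.isStrongMgu.idempotent,
    hθ.linearFor_restrict hS, hθ.ran_restrict_varsL_subset hdisj⟩
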